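/- Let φ : [0,∞) → [0,∞) be continuous and define φ̃(t) = max_{0≤s≤t} φ(s) for t ≥ 0. Then the following statements are equivalent: (a) there exists t > 0 such that φ^n(t) → ∞ as n → ∞; (b) there exists t' > 0 such that the set {φ^n(t') : n ≥ 0} is unbounded; (c) there exists T > 0 such that φ̃(t) > t for all t ≥ T; (d) there exist t ≥ T > 0 such that the sequences (φ^n(t))_{n≥0} and (φ̃^n(T))_{n≥0} are strictly increasing with limit ∞, and φ̃^n(T) ≤ φ^n(t) ≤ φ̃^{n+1}(T) for all n ≥ 0; (e) there exists a sequence (t_n)_{n≥0} of positive real numbers with t_n → ∞ as n → ∞ and φ(t_n) ≥ t_{n+1} for all n ≥ 0. -/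

import Mathlib

/-!
The running maximum `φ̃` controls orbits from above: if `φ̃ s ≤ s`, then `[0, s]` is
`φ`-invariant, so any nonnegative sequence starting in `[0, s]` with `t (n + 1) ≤ φ (t n)` stays there
(`le_of_step_le`). Hence (b) and (e) each force (c).

For (c) → (d), put `Tₙ = φ̃ⁿ(T)`. This sequence is strictly increasing, and it is unbounded
because a finite limit `L` would satisfy `φ̃ L ≤ L`. As the maximum of `φ` over `[0, Tₙ₊₁]` exceeds
the one over `[0, Tₙ]`, it is attained in `Iₙ = [Tₙ, Tₙ₊₁]`, while `φ Tₙ ≤ Tₙ₊₁`; by the intermediate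
value theorem `φ(Iₙ) ⊇ Iₙ₊₁` (`surjOn_Icc_step`). A nested compactness argument
(`exists_itinerary`) gives a point `t` with `φⁿ(t) ∈ Iₙ` for all `n`. Its orbit is monotone and
tends to infinity, and it is strictly monotone because two equal consecutive terms would make the
orbit eventually constant. The remaining implications are immediate.
-/

open Set Filter Topology

/-- An interval `[0, s]` on which `φ ≤ s` traps every nonnegative sequence growing no faster than `φ`. -/
lemma le_of_step_le {φ : ℝ → ℝ} {s : ℝ} (hs : ∀ x ∈ Icc 0 s, φ x ≤ s) {u : ℕ → ℝ}
    (h0 : u 0 ≤ s) (hpos : ∀ n, 0 ≤ u n) (hu : ∀ n, u (n + 1) ≤ φ (u n)) (n : ℕ) : u n ≤ s := by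
  induction n with
  | zero => exact h0
  | succ n ih => exact (hu n).trans (hs _ ⟨hpos n, ih⟩)

lemma le_runningMax {φ : ℝ → ℝ} (hc : ContinuousOn φ (Ici 0)) {φt : ℝ → ℝ}
    (hφt : ∀ t : ℝ, 0 ≤ t → φt t = sSup (φ '' Icc 0 t)) {s t : ℝ} (hs : s ∈ Icc 0 t) :
    φ s ≤ φt t := by
  rw [hφt t (hs.1.trans hs.2)]
  exact le_csSup (isCompact_Icc.image_of_continuousOn (hc.mono Icc_subset_Ici_self)).bddAbove
    (mem_image_of_mem φ hs)

lemma exists_eq_runningMax {φ : ℝ → ℝ} (hc : ContinuousOn φ (Ici 0)) {φt : ℝ → ℝ}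
    (hφt : ∀ t : ℝ, 0 ≤ t → φt t = sSup (φ '' Icc 0 t)) {t : ℝ} (ht : 0 ≤ t) :
    ∃ s ∈ Icc 0 t, φ s = φt t := by
  rw [hφt t ht]
  exact (isCompact_Icc.image_of_continuousOn (hc.mono Icc_subset_Ici_self)).sSup_mem
    ((nonempty_Icc.2 ht).image φ)

/-- If the running maximum exceeds the identity on `[T, ∞)`, its orbit of `T` has no finite
limit. -/
lemma tendsto_runningMax_orbit {φ : ℝ → ℝ} (hc : ContinuousOn φ (Ici 0)) {φt : ℝ → ℝ}
    (hφt : ∀ t : ℝ, 0 ≤ t → φt t = sSup (φ '' Icc 0 t)) {T : ℝ} (hT : 0 < T)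
    (h : ∀ t : ℝ, T ≤ t → t < φt t) {u : ℕ → ℝ} (hu : StrictMono u) (hu0 : u 0 = T)
    (hstep : ∀ n, u (n + 1) = φt (u n)) : Tendsto u atTop atTop := by
  have hTu : ∀ n, T ≤ u n := fun n => hu0 ▸ hu.monotone (Nat.zero_le n)
  rcases tendsto_atTop_of_monotone hu.monotone with hlim | ⟨L, hL⟩
  · exact hlim
  exfalso
  have huL : ∀ n, u n ≤ L := fun n => hu.monotone.ge_of_tendsto hL n
  have hTL : T ≤ L := (hTu 0).trans (huL 0)
  have hpos : ∀ n, 0 ≤ u n := fun n => hT.le.trans (hTu n)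
  obtain ⟨s, hs, hφs⟩ := exists_eq_runningMax hc hφt (hT.le.trans hTL)
  have hgt : L < φ s := hφs ▸ h L hTL
  rcases hs.2.lt_or_eq with hsL | rfl
  · obtain ⟨n, hn⟩ := (hL.eventually (lt_mem_nhds hsL)).exists
    have h1 := le_runningMax hc hφt (⟨hs.1, hn.le⟩ : s ∈ Icc 0 (u n))
    rw [← hstep] at h1
    linarith [huL (n + 1)]
  · -- The maximum over `[0, L]` is attained at `L` itself: pass to the limit in `φ (u n) ≤ L`.
    have hlim : Tendsto (fun n => φ (u n)) atTop (𝓝 (φ s)) :=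
      (hc s hs.1).tendsto.comp
        (tendsto_nhdsWithin_iff.2 ⟨hL, Eventually.of_forall hpos⟩)
    have hle : φ s ≤ s := le_of_tendsto' hlim fun n =>
      (le_runningMax hc hφt (right_mem_Icc.2 (hpos n))).trans (hstep n ▸ huL (n + 1))
    linarith

/-- Consecutive intervals of the running-maximum orbit are covered by `φ`. -/
lemma surjOn_Icc_step {φ : ℝ → ℝ} (hc : ContinuousOn φ (Ici 0)) {φt : ℝ → ℝ}
    (hφt : ∀ t : ℝ, 0 ≤ t → φt t = sSup (φ '' Icc 0 t)) {a b c : ℝ} (ha : 0 ≤ a)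
    (hab : a ≤ b) (hbc : b < c) (hb : φt a = b) (hcb : φt b = c) :
    SurjOn φ (Icc a b) (Icc b c) := by
  obtain ⟨s, hs, hφs⟩ := exists_eq_runningMax hc hφt (ha.trans hab)
  have has : a ≤ s := by
    by_contra! hlt
    have := le_runningMax hc hφt (⟨hs.1, hlt.le⟩ : s ∈ Icc 0 a)
    linarith
  have hφa : φ a ≤ b := hb ▸ le_runningMax hc hφt (right_mem_Icc.2 ha)
  intro y hy
  have hy' : y ∈ Icc (φ a) (φ s) := ⟨hφa.trans hy.1, by rw [hφs, hcb]; exact hy.2⟩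
  obtain ⟨x, hx, rfl⟩ := intermediate_value_Icc has
    (hc.mono fun x hx => ha.trans hx.1) hy'
  exact ⟨x, ⟨hx.1, hx.2.trans hs.2⟩, rfl⟩

/-- If each interval covers the next one under `φ`, some orbit visits the intervals in order. -/
lemma exists_itinerary {φ : ℝ → ℝ} (hc : ContinuousOn φ (Ici 0))
    (hmap : MapsTo φ (Ici 0) (Ici 0)) {u : ℕ → ℝ} (hu : StrictMono u) (hu0 : 0 ≤ u 0)
    (hcov : ∀ n, SurjOn φ (Icc (u n) (u (n + 1))) (Icc (u (n + 1)) (u (n + 2)))) :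
    ∃ t, ∀ n, φ^[n] t ∈ Icc (u n) (u (n + 1)) := by
  -- Every point of the `n`-th interval is reached by an orbit segment with the right itinerary.
  have hback : ∀ n, ∀ y ∈ Icc (u n) (u (n + 1)),
      ∃ t, (∀ k ≤ n, φ^[k] t ∈ Icc (u k) (u (k + 1))) ∧ φ^[n] t = y := by
    intro n
    induction n with
    | zero =>
      intro y hy
      refine ⟨y, fun k hk => ?_, rfl⟩
      obtain rfl : k = 0 := by omega
      exact hy
    | succ n ih =>
      intro y hy
      obtain ⟨x, hx, hxy⟩ := hcov n hy
      obtain ⟨t, ht, htx⟩ := ih x hx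
      have hty : φ^[n + 1] t = y := by rw [Function.iterate_succ_apply', htx, hxy]
      refine ⟨t, fun k hk => ?_, hty⟩
      rcases Nat.le_succ_iff.1 hk with hk | rfl
      · exact ht k hk
      · rw [Nat.succ_eq_add_one, hty]; exact hy
  have hsub : Icc (u 0) (u 1) ⊆ Ici 0 := fun x hx => hu0.trans hx.1
  let A : ℕ → Set ℝ := fun k => Icc (u 0) (u 1) ∩ φ^[k] ⁻¹' Icc (u k) (u (k + 1))
  have hA : ∀ k, IsClosed (A k) := fun k =>
    ((hc.iterate hmap k).mono hsub).preimage_isClosed_of_isClosed isClosed_Icc isClosed_Icc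
  let K : ℕ → Set ℝ := fun n => ⋂ k ≤ n, A k
  have hK : ∀ n, IsClosed (K n) := fun n => isClosed_biInter fun k _ => hA k
  have hne : (⋂ n, K n).Nonempty := by
    refine IsCompact.nonempty_iInter_of_sequence_nonempty_isCompact_isClosed K ?_ ?_ ?_ hK
    · exact fun n => biInter_subset_biInter_left fun k (hk : k ≤ n) => Nat.le_succ_of_le hk
    · intro n
      obtain ⟨t, ht, -⟩ := hback n (u n) (left_mem_Icc.2 (hu.monotone n.le_succ))
      exact ⟨t, mem_iInter₂.2 fun k hk => ⟨ht 0 (Nat.zero_le n), ht k hk⟩⟩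
    · exact isCompact_Icc.of_isClosed_subset (hK 0)
        fun x hx => (mem_iInter₂.1 hx 0 le_rfl).1
  obtain ⟨t, ht⟩ := hne
  exact ⟨t, fun n => (mem_iInter₂.1 (mem_iInter.1 ht n) n le_rfl).2⟩

/-- **Equivalent forms of the iterated minimum modulus condition.** For a continuous
`φ : [0,∞) → [0,∞)` with `φ̃(t) = max_{0 ≤ s ≤ t} φ(s)`, the five statements (a)–(e)
are equivalent. -/
theorem iterate_tendsto_tfae (φ : ℝ → ℝ)
    (hc : ContinuousOn φ (Ici 0)) (hmap : MapsTo φ (Ici 0) (Ici 0))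
    (φt : ℝ → ℝ) (hφt : ∀ t : ℝ, 0 ≤ t → φt t = sSup (φ '' Icc 0 t)) :
    List.TFAE
      [ ∃ t > 0, Tendsto (fun n : ℕ => φ^[n] t) atTop atTop,
        ∃ t' > 0, ¬ BddAbove (Set.range fun n : ℕ => φ^[n] t'),
        ∃ T > 0, ∀ t : ℝ, T ≤ t → t < φt t,
        ∃ T > 0, ∃ t : ℝ, T ≤ t ∧
          StrictMono (fun n : ℕ => φ^[n] t) ∧ Tendsto (fun n : ℕ => φ^[n] t) atTop atTop ∧
          StrictMono (fun n : ℕ => φt^[n] T) ∧ Tendsto (fun n : ℕ => φt^[n] T) atTop atTop ∧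
          ∀ n : ℕ, φ^[n] t ∈ Icc (φt^[n] T) (φt^[n + 1] T),
        ∃ t : ℕ → ℝ, (∀ n, 0 < t n) ∧ Tendsto t atTop atTop ∧
          ∀ n : ℕ, t (n + 1) ≤ φ (t n) ] := by
  have hiter : ∀ t : ℝ, 0 ≤ t → ∀ n, 0 ≤ φ^[n] t := fun t ht n => hmap.iterate n ht
  -- If (c) failed at some `s ≥ u 0`, the interval `[0, s]` would trap `u`.
  have htrap : ∀ u : ℕ → ℝ, 0 < u 0 → (∀ n, 0 ≤ u n) → (∀ n, u (n + 1) ≤ φ (u n)) →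
      ¬ BddAbove (range u) → ∃ T > 0, ∀ t : ℝ, T ≤ t → t < φt t := by
    intro u h0 hpos hu hub
    refine ⟨u 0, h0, fun s hs => ?_⟩
    by_contra! hle
    refine hub ⟨s, ?_⟩
    rintro _ ⟨n, rfl⟩
    exact le_of_step_le (fun x hx => (le_runningMax hc hφt hx).trans hle) hs hpos hu n
  tfae_have 1 → 2 := by
    rintro ⟨t, ht, hlim⟩
    exact ⟨t, ht, not_bddAbove_of_tendsto_atTop hlim⟩
  tfae_have 2 → 3 := by
    rintro ⟨t, ht, hub⟩
    exact htrap _ ht (hiter t ht.le)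
      (fun n => (Function.iterate_succ_apply' φ n t).le) hub
  tfae_have 3 → 4 := by
    rintro ⟨T, hT, h⟩
    have hstep : ∀ n, φt^[n + 1] T = φt (φt^[n] T) :=
      fun n => Function.iterate_succ_apply' φt n T
    have hTn : ∀ n, T ≤ φt^[n] T := by
      intro n
      induction n with
      | zero => exact le_rfl
      | succ n ih => rw [hstep]; exact ih.trans (h _ ih).le
    have hmono : StrictMono fun n : ℕ => φt^[n] T :=
      strictMono_nat_of_lt_succ fun n => by rw [hstep]; exact h _ (hTn n)
    have hlim := tendsto_runningMax_orbit hc hφt hT h hmono rfl hstep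
    obtain ⟨t, ht⟩ := exists_itinerary hc hmap hmono hT.le fun n =>
      surjOn_Icc_step hc hφt (hT.le.trans (hTn n)) (hmono.monotone n.le_succ)
        (hmono (n + 1).lt_succ_self) (hstep n).symm (hstep (n + 1)).symm
    have htlim : Tendsto (fun n : ℕ => φ^[n] t) atTop atTop :=
      tendsto_atTop_mono (fun n => (ht n).1) hlim
    refine ⟨T, hT, t, (ht 0).1, strictMono_nat_of_lt_succ fun n => ?_, htlim, hmono, hlim, ht⟩
    refine lt_of_le_of_ne ((ht n).2.trans (ht (n + 1)).1) fun heq => ?_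
    -- Equal consecutive terms give a fixed point, so the orbit would be eventually constant.
    have hfix : Function.IsFixedPt φ (φ^[n] t) := by
      rw [Function.IsFixedPt, ← Function.iterate_succ_apply' φ n t]; exact heq.symm
    have hconst : ∀ k, φ^[k + n] t = φ^[n] t := fun k => by
      rw [Function.iterate_add_apply]; exact hfix.iterate k
    have hshift := (tendsto_add_atTop_iff_nat n).2 htlim
    simp only [hconst] at hshift
    exact not_tendsto_const_atTop _ _ hshift
  tfae_have 4 → 1 := by
    rintro ⟨T, hT, t, hTt, -, hlim, -⟩
    exact ⟨t, hT.trans_le hTt, hlim⟩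
  tfae_have 4 → 5 := by
    rintro ⟨T, hT, t, hTt, hmono, hlim, -⟩
    exact ⟨fun n => φ^[n] t,
      fun n => (hT.trans_le hTt).trans_le (hmono.monotone (Nat.zero_le n)), hlim,
      fun n => (Function.iterate_succ_apply' φ n t).le⟩
  tfae_have 5 → 3 := by
    rintro ⟨u, hpos, hlim, hu⟩
    exact htrap u (hpos 0) (fun n => (hpos n).le) hu (not_bddAbove_of_tendsto_atTop hlim)
  tfae_finish
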